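/- Let H be a complex Hilbert space, let U and V be closed subspaces of H, let R and R' be bounded linear operators on H, and let 0 ≤ σ < τ be real numbers. Assume that (i) ‖R u‖ ≤ ‖u‖/(1+τ) for every u in the orthogonal complement V^⊥ of V, (ii) ‖R' u‖ ≥ ‖u‖/(1+σ) for every u ∈ U, and (iii) the operator norm satisfies ‖R − R'‖ < 1/(1+σ) − 1/(1+τ). Then U ∩ V^⊥ = {0}; equivalently, the restriction to U of the orthogonal projection of H onto V is injective. -/

import Mathlib

section OpNormGap

variable {𝕜 𝕜₂ E F : Type*} [NontriviallyNormedField 𝕜] [NontriviallyNormedField 𝕜₂]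
  {φ : 𝕜 →+* 𝕜₂} [RingHomIsometric φ] [SeminormedAddCommGroup F] [NormedSpace 𝕜₂ F] {a b : ℝ}

theorem sub_le_opNorm_sub_of_norm_le_of_le_norm [SeminormedAddCommGroup E] [NormedSpace 𝕜 E]
    {R R' : E →SL[φ] F} {x : E} (hx : 0 < ‖x‖)
    (hR : ‖R x‖ ≤ a * ‖x‖) (hR' : b * ‖x‖ ≤ ‖R' x‖) : b - a ≤ ‖R - R'‖ := by
  refine le_of_mul_le_mul_right ?_ hx
  calc (b - a) * ‖x‖ = b * ‖x‖ - a * ‖x‖ := sub_mul _ _ _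
    _ ≤ ‖R' x‖ - ‖R x‖ := sub_le_sub hR' hR
    _ ≤ ‖R' x - R x‖ := norm_sub_norm_le _ _
    _ = ‖(R - R') x‖ := norm_sub_rev _ _
    _ ≤ ‖R - R'‖ * ‖x‖ := (R - R').le_opNorm x

theorem stmt_0_general [NormedAddCommGroup E] [NormedSpace 𝕜 E] {U W : Submodule 𝕜 E}
    {R R' : E →SL[φ] F} (hR : ∀ u ∈ W, ‖R u‖ ≤ a * ‖u‖) (hR' : ∀ u ∈ U, b * ‖u‖ ≤ ‖R' u‖)
    (hdiff : ‖R - R'‖ < b - a) : U ⊓ W = ⊥ := by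
  refine (Submodule.eq_bot_iff _).mpr fun u ⟨huU, huW⟩ => ?_
  by_contra hu
  exact hdiff.not_ge <|
    sub_le_opNorm_sub_of_norm_le_of_le_norm (norm_pos_iff.mpr hu) (hR u huW) (hR' u huU)

end OpNormGap

/-- quantitative injectivity of the projection. If `R` contracts by
`1/(1+τ)` on `Vᗮ`, `R'` expands by at least `1/(1+σ)` on `U`, and
`‖R - R'‖ < 1/(1+σ) - 1/(1+τ)`, then `U ∩ Vᗮ = {0}`, i.e. the orthogonal
projection onto `V` restricted to `U` is injective. -/
theorem stmt_0 {H : Type*} [NormedAddCommGroup H] [InnerProductSpace ℂ H]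
    [CompleteSpace H]
    (U V : Submodule ℂ H) (hU : IsClosed (U : Set H)) (hV : IsClosed (V : Set H))
    (R R' : H →L[ℂ] H) (σ τ : ℝ) (hσ : 0 ≤ σ) (hστ : σ < τ)
    (hR : ∀ u ∈ Vᗮ, ‖R u‖ ≤ ‖u‖ / (1 + τ))
    (hR' : ∀ u ∈ U, ‖u‖ / (1 + σ) ≤ ‖R' u‖)
    (hdiff : ‖R - R'‖ < 1 / (1 + σ) - 1 / (1 + τ)) :
    U ⊓ Vᗮ = ⊥ := by
  simp only [div_eq_inv_mul, mul_one] at hR hR' hdiff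
  exact stmt_0_general hR hR' hdiff
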